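/- Let α ∈ (1,2) and let ψ : ℝ → ℝ be a three times continuously differentiable, compactly supported function satisfying the vanishing moment conditions ∫_ℝ s^m ψ(s) ds = 0 for m ∈ {0,1,2,3}. Define Ψ : ℝ × (1/α, 1) → ℝ by Ψ(x,v) := ∫_ℝ (x−s)_+^{v − 1/α} ψ(s) ds. Then for every p ∈ {0,1,2,3} and every q ∈ ℕ, the mixed partial derivative ∂_x^p ∂_v^q Ψ exists and is continuous on ℝ × (1/α, 1), and for all real numbers a, b with 1/α < a < b < 1, sup_{(x,v) ∈ ℝ × [a,b]} (3 + |x|)² | (∂_x^p ∂_v^q Ψ)(x,v) | < ∞. -/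

import Mathlib

open Set MeasureTheory

/-- The truncated power function `(x)_+^κ`, equal to `x^κ` if `x > 0` and `0` otherwise. -/
noncomputable def posPow (x κ : ℝ) : ℝ := if 0 < x then x ^ κ else 0

/-- The fractional primitive `Ψ(x,v) = ∫ (x-s)_+^{v - 1/α} ψ(s) ds` of the wavelet `ψ`. -/
noncomputable def fracPrimitive (α : ℝ) (ψ : ℝ → ℝ) (x v : ℝ) : ℝ :=
  ∫ s : ℝ, posPow (x - s) (v - 1 / α) * ψ s

open Filter Topology

namespace FPL

/-- kernel -/
noncomputable def K (q : ℕ) (u κ : ℝ) : ℝ := posPow u κ * Real.log u ^ q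

lemma K_of_nonpos (q : ℕ) {u : ℝ} (hu : u ≤ 0) (κ : ℝ) : K q u κ = 0 := by
  simp [K, posPow, not_lt.2 hu]

lemma K_of_pos (q : ℕ) {u : ℝ} (hu : 0 < u) (κ : ℝ) : K q u κ = u ^ κ * Real.log u ^ q := by
  simp [K, posPow, hu]

lemma K_deriv (q : ℕ) (u κ : ℝ) : HasDerivAt (fun κ' => K q u κ') (K (q + 1) u κ) κ := by
  rcases le_or_gt u 0 with hu | hu
  · simp only [K_of_nonpos _ hu]
    exact hasDerivAt_const _ _
  · simp only [K_of_pos _ hu]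
    have := (Real.hasStrictDerivAt_const_rpow hu κ).hasDerivAt.mul_const (Real.log u ^ q)
    exact this.congr_deriv (by ring)

lemma K_small (q : ℕ) {k0 : ℝ} (hk0 : 0 < k0) : ∃ C : ℝ, ∀ u κ : ℝ, u ≤ 1 → k0 ≤ κ →
    |K q u κ| ≤ C * (max u 0) ^ (k0 / 2) := by
  set t : ℝ := k0 / (2 * (q + 1)) with ht
  have htp : 0 < t := by positivity
  refine ⟨(1 / t) ^ q, fun u κ hu hκ => ?_⟩
  rcases le_or_gt u 0 with h0 | h0
  · rw [K_of_nonpos _ h0, abs_zero]; positivity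
  · rw [K_of_pos _ h0, max_eq_left h0.le, abs_mul, abs_of_pos (Real.rpow_pos_of_pos h0 κ), abs_pow]
    have h1 : u ^ κ ≤ u ^ (k0 / 2) * (u ^ t) ^ q := by
      rw [← Real.rpow_natCast, ← Real.rpow_mul h0.le, ← Real.rpow_add h0]
      apply Real.rpow_le_rpow_of_exponent_ge h0 hu
      have : t * q ≤ k0 / 2 := by
        rw [ht, div_mul_eq_mul_div, div_le_div_iff₀ (by positivity) (by positivity)]
        nlinarith
      linarith
    have h2 : |Real.log u| * u ^ t ≤ 1 / t := by
      have := (Real.abs_log_mul_self_rpow_lt u t h0 hu htp).le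
      rwa [abs_mul, abs_of_pos (Real.rpow_pos_of_pos h0 t)] at this
    calc u ^ κ * |Real.log u| ^ q ≤ (u ^ (k0 / 2) * (u ^ t) ^ q) * |Real.log u| ^ q := by gcongr
      _ = (|Real.log u| * u ^ t) ^ q * u ^ (k0 / 2) := by rw [mul_pow]; ring
      _ ≤ (1 / t) ^ q * u ^ (k0 / 2) := by gcongr

lemma K_cont (q : ℕ) (u κ : ℝ) (hκ : 0 < κ) :
    ContinuousAt (fun z : ℝ × ℝ => K q z.1 z.2) (u, κ) := by
  rcases lt_trichotomy u 0 with hu | hu | hu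
  · have : (fun z : ℝ × ℝ => K q z.1 z.2) =ᶠ[𝓝 (u, κ)] fun _ => 0 := by
      have h := continuous_fst.continuousAt.eventually (Iio_mem_nhds (show (u, κ).1 < 0 from hu))
      filter_upwards [h] with z hz using K_of_nonpos _ (le_of_lt hz) _
    exact continuousAt_const.congr this.symm
  · subst hu
    obtain ⟨C, hC⟩ := K_small q (half_pos hκ)
    unfold ContinuousAt
    simp only
    rw [K_of_nonpos q le_rfl]
    have h1 := continuous_fst.continuousAt.eventually
      (Iio_mem_nhds (show ((0:ℝ), κ).1 < 1 by norm_num))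
    have h2 := continuous_snd.continuousAt.eventually
      (Ioi_mem_nhds (show κ / 2 < ((0:ℝ), κ).2 by simpa using hκ))
    have hc : Continuous fun z : ℝ × ℝ => C * (max z.1 0) ^ (κ / 2 / 2) := by
      apply continuous_const.mul
      apply Continuous.rpow_const (by fun_prop)
      intro; right; positivity
    have h3 := hc.tendsto ((0:ℝ), κ)
    have h4 : C * (max ((0:ℝ), κ).1 0) ^ (κ / 2 / 2) = 0 := by
      simp [Real.zero_rpow (show κ / 2 / 2 ≠ 0 by positivity)]
    rw [h4] at h3
    apply squeeze_zero_norm' _ h3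
    filter_upwards [h1, h2] with z hz1 hz2
    exact hC _ _ (le_of_lt hz1) (le_of_lt hz2)
  · have : (fun z : ℝ × ℝ => K q z.1 z.2) =ᶠ[𝓝 (u, κ)]
        fun z => z.1 ^ z.2 * Real.log z.1 ^ q := by
      have h := continuous_fst.continuousAt.eventually (Ioi_mem_nhds (show 0 < (u, κ).1 from hu))
      filter_upwards [h] with z hz using K_of_pos _ hz _
    refine ContinuousAt.congr ?_ this.symm
    apply ContinuousAt.mul
    · exact continuousAt_fst.rpow continuousAt_snd (Or.inl hu.ne')
    · exact (continuousAt_fst.log hu.ne').pow q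

lemma K_contOn (q : ℕ) : ContinuousOn (fun z : ℝ × ℝ => K q z.1 z.2) (univ ×ˢ Ioi 0) :=
  fun z hz => (K_cont q z.1 z.2 hz.2).continuousWithinAt

lemma K_cont1 (q : ℕ) {κ : ℝ} (hκ : 0 < κ) : Continuous fun u => K q u κ :=
  continuous_iff_continuousAt.2 fun u =>
    (K_cont q u κ hκ).comp (f := fun u : ℝ => (u, κ)) (by fun_prop)

/-- the general integral -/
noncomputable def J (g : ℝ → ℝ) (q : ℕ) (x κ : ℝ) : ℝ := ∫ s, K q (x - s) κ * g s

lemma J_contOn {g : ℝ → ℝ} (hg : Continuous g) (hs : HasCompactSupport g) (q : ℕ) :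
    ContinuousOn (fun z : ℝ × ℝ => J g q z.1 z.2) (univ ×ˢ Ioi 0) := by
  unfold J
  refine continuousOn_integral_of_compact_support (f := fun (z : ℝ × ℝ) s => K q (z.1 - s) z.2 * g s)
    (k := tsupport g) hs ?_ ?_
  · refine ContinuousOn.mul ?_ (by fun_prop)
    refine (K_contOn q).comp (f := fun w : (ℝ × ℝ) × ℝ => (w.1.1 - w.2, w.1.2)) (by fun_prop) ?_
    intro w hw
    exact ⟨mem_univ _, hw.1.2⟩
  · intro z s _ h
    simp [image_eq_zero_of_notMem_tsupport h]

lemma J_deriv_x {g : ℝ → ℝ} (hg : ContDiff ℝ 1 g) (hs : HasCompactSupport g) (q : ℕ)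
    {κ : ℝ} (hκ : 0 < κ) (x : ℝ) :
    HasDerivAt (fun x' => J g q x' κ) (J (deriv g) q x κ) x := by
  have key : ∀ (h : ℝ → ℝ) (y : ℝ), J h q y κ =
      (convolution (fun u => K q u κ) h (ContinuousLinearMap.mul ℝ ℝ) volume) y := by
    intro h y
    unfold J convolution
    rw [← integral_sub_left_eq_self _ volume y]
    simp
  simp only [key]
  exact hs.hasDerivAt_convolution_right _ (K_cont1 q hκ).locallyIntegrable hg x

lemma J_int {g : ℝ → ℝ} (hg : Continuous g) (hs : HasCompactSupport g) (q : ℕ)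
    {κ : ℝ} (hκ : 0 < κ) (x : ℝ) : Integrable fun s => K q (x - s) κ * g s :=
  (((K_cont1 q hκ).comp (by fun_prop : Continuous fun s => x - s)).mul
    hg).integrable_of_hasCompactSupport hs.mul_left

lemma J_deriv_κ {g : ℝ → ℝ} (hg : Continuous g) (hs : HasCompactSupport g) (q : ℕ)
    {κ : ℝ} (hκ : 0 < κ) (x : ℝ) :
    HasDerivAt (fun κ' => J g q x κ') (J g (q + 1) x κ) κ := by
  have hcomp : IsCompact (tsupport g ×ˢ Icc (κ / 2) (κ + 1)) := IsCompact.prod hs isCompact_Icc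
  have hcont : ContinuousOn (fun w : ℝ × ℝ => K (q + 1) (x - w.1) w.2)
      (tsupport g ×ˢ Icc (κ / 2) (κ + 1)) := by
    refine (K_contOn (q + 1)).comp (f := fun w : ℝ × ℝ => (x - w.1, w.2)) (by fun_prop) ?_
    intro w hw
    exact ⟨mem_univ _, lt_of_lt_of_le (half_pos hκ) hw.2.1⟩
  obtain ⟨M, hM⟩ := hcomp.exists_bound_of_continuousOn hcont
  refine (hasDerivAt_integral_of_dominated_loc_of_deriv_le (μ := volume)
    (F := fun κ s => K q (x - s) κ * g s) (F' := fun κ s => K (q + 1) (x - s) κ * g s)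
    (bound := fun s => M * |g s|)
    (Icc_mem_nhds (show κ / 2 < κ by linarith) (show κ < κ + 1 by linarith)) ?_ ?_ ?_ ?_ ?_ ?_).2
  · filter_upwards [Ioi_mem_nhds hκ] with k hk using (J_int hg hs q hk x).1
  · exact J_int hg hs q hκ x
  · exact (J_int hg hs (q + 1) hκ x).1
  · refine ae_of_all _ fun s k hk => ?_
    by_cases h : s ∈ tsupport g
    · rw [norm_mul]
      exact mul_le_mul_of_nonneg_right (hM (s, k) ⟨h, hk⟩) (abs_nonneg _)
    · simp [image_eq_zero_of_notMem_tsupport h]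
  · exact (hg.integrable_of_hasCompactSupport hs).abs.const_mul M
  · exact ae_of_all _ fun s k _ => (K_deriv q (x - s) k).mul_const (g s)

lemma taylor3 {f f1 f2 f3 : ℝ → ℝ} {c R M : ℝ} (hR : 0 ≤ R)
    (h0 : ∀ y ∈ Icc (c - R) (c + R), HasDerivAt f (f1 y) y)
    (h1 : ∀ y ∈ Icc (c - R) (c + R), HasDerivAt f1 (f2 y) y)
    (h2 : ∀ y ∈ Icc (c - R) (c + R), HasDerivAt f2 (f3 y) y)
    (hM : ∀ y ∈ Icc (c - R) (c + R), |f3 y| ≤ M) (s : ℝ) (hs : |s| ≤ R) :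
    |f (c - s) - (f c - s * f1 c + s ^ 2 / 2 * f2 c)| ≤ M * R * R * R := by
  have hc : c ∈ Icc (c - R) (c + R) := ⟨by linarith, by linarith⟩
  have hM0 : 0 ≤ M := (abs_nonneg _).trans (hM c hc)
  have hd : ∀ y ∈ Icc (c - R) (c + R), ‖y - c‖ ≤ R := fun y hy =>
    abs_le.2 ⟨by linarith [hy.1], by linarith [hy.2]⟩
  have b2 : ∀ y ∈ Icc (c - R) (c + R), ‖f2 y - f2 c‖ ≤ M * R := fun y hy =>
    (Convex.norm_image_sub_le_of_norm_hasDerivWithin_le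
      (fun z hz => (h2 z hz).hasDerivWithinAt) hM (convex_Icc _ _) hc hy).trans
      (mul_le_mul_of_nonneg_left (hd y hy) hM0)
  have b1 : ∀ y ∈ Icc (c - R) (c + R), ‖f1 y - f1 c - (y - c) * f2 c‖ ≤ M * R * R := fun y hy => by
    have := (Convex.norm_image_sub_le_of_norm_hasDerivWithin_le
      (f := fun z => f1 z - z * f2 c) (f' := fun z => f2 z - f2 c)
      (fun z hz => (((h1 z hz).sub ((hasDerivAt_id z).mul_const (f2 c))).congr_deriv
        (by simp)).hasDerivWithinAt) b2 (convex_Icc _ _) hc hy).trans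
      (mul_le_mul_of_nonneg_left (hd y hy) (by positivity))
    refine le_trans (le_of_eq ?_) this
    congr 1; ring
  have b0 : ∀ y ∈ Icc (c - R) (c + R),
      ‖f y - f c - (y - c) * f1 c - (y - c) ^ 2 / 2 * f2 c‖ ≤ M * R * R * R := fun y hy => by
    have := (Convex.norm_image_sub_le_of_norm_hasDerivWithin_le
      (f := fun z => f z - z * f1 c - (z - c) ^ 2 * (f2 c / 2))
      (f' := fun z => f1 z - f1 c - (z - c) * f2 c)
      (fun z hz => ((((h0 z hz).sub ((hasDerivAt_id z).mul_const (f1 c))).sub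
        ((((hasDerivAt_id z).sub_const c).pow 2).mul_const (f2 c / 2))).congr_deriv
        (by simp; ring)).hasDerivWithinAt) b1 (convex_Icc _ _) hc hy).trans
      (mul_le_mul_of_nonneg_left (hd y hy) (by positivity))
    refine le_trans (le_of_eq ?_) this
    congr 1; ring
  have := b0 (c - s) ⟨by linarith [(abs_le.1 hs).2], by linarith [(abs_le.1 hs).1]⟩
  rw [Real.norm_eq_abs] at this
  refine le_trans (le_of_eq ?_) this
  congr 1; ring

/-- derivatives of `u ^ a * log u ^ q` -/
noncomputable def T : ℕ → ℝ → ℕ → ℝ → ℝ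
  | 0, a, q, u => u ^ a * Real.log u ^ q
  | n + 1, a, q, u => a * T n (a - 1) q u + q * T n (a - 1) (q - 1) u

lemma T_deriv (n : ℕ) : ∀ (a : ℝ) (q : ℕ) (u : ℝ), 0 < u →
    HasDerivAt (T n a q) (T (n + 1) a q u) u := by
  induction n with
  | zero =>
    intro a q u hu
    have := (Real.hasDerivAt_rpow_const (p := a) (Or.inl hu.ne')).mul
      ((Real.hasDerivAt_log hu.ne').pow q)
    refine HasDerivAt.congr_deriv (f := T 0 a q) this ?_
    simp only [T, Pi.pow_apply]
    rw [Real.rpow_sub_one hu.ne']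
    field_simp
  | succ n ih =>
    intro a q u hu
    exact ((ih (a - 1) q u hu).const_mul a).add ((ih (a - 1) (q - 1) u hu).const_mul (q : ℝ))

lemma T_bound (n : ℕ) : ∀ (a : ℝ) (q : ℕ) (u : ℝ), 1 ≤ u →
    |T n a q u| ≤ (|a| + n + q) ^ n * (u ^ (a - n) * (1 + Real.log u) ^ q) := by
  induction n with
  | zero =>
    intro a q u hu
    have hl := Real.log_nonneg hu
    simp only [T, Nat.cast_zero, pow_zero, one_mul, sub_zero]
    rw [abs_of_nonneg (by positivity)]
    gcongr
    linarith
  | succ n ih =>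
    intro a q u hu
    have hl := Real.log_nonneg hu
    have hu0 : 0 < u := by linarith
    have e1 := ih (a - 1) q u hu
    have e2 := ih (a - 1) (q - 1) u hu
    have hq : ((q - 1 : ℕ) : ℝ) ≤ q := by exact_mod_cast Nat.sub_le q 1
    have ha : |a - 1| ≤ |a| + 1 := by simpa using abs_sub a 1
    have hp : (1 + Real.log u) ^ (q - 1) ≤ (1 + Real.log u) ^ q :=
      pow_le_pow_right₀ (by linarith) (Nat.sub_le q 1)
    have hexp : a - 1 - n = a - (n + 1 : ℕ) := by push_cast; ring
    rw [hexp] at e1 e2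
    set P := u ^ (a - (n + 1 : ℕ)) * (1 + Real.log u) ^ q with hP
    have hP0 : 0 ≤ P := by positivity
    set Cc : ℝ := |a| + (n + 1 : ℕ) + q with hC
    have hC0 : 0 ≤ Cc := by positivity
    have f1 : |T n (a - 1) q u| ≤ Cc ^ n * P := by
      refine e1.trans ?_
      gcongr
      rw [hC]; push_cast; linarith
    have f2 : |T n (a - 1) (q - 1) u| ≤ Cc ^ n * P := by
      refine e2.trans ?_
      rw [hP]
      gcongr
      rw [hC]; push_cast; linarith
    calc |T (n + 1) a q u| ≤ |a * T n (a - 1) q u| + |q * T n (a - 1) (q - 1) u| := abs_add_le _ _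
      _ = |a| * |T n (a - 1) q u| + q * |T n (a - 1) (q - 1) u| := by
        rw [abs_mul, abs_mul, Nat.abs_cast]
      _ ≤ |a| * (Cc ^ n * P) + q * (Cc ^ n * P) := by gcongr
      _ = (|a| + q) * (Cc ^ n * P) := by ring
      _ ≤ Cc * (Cc ^ n * P) := by
        gcongr
        rw [hC]; push_cast; linarith [(Nat.cast_nonneg n : (0:ℝ) ≤ n)]
      _ = Cc ^ (n + 1) * P := by ring

lemma T3_bound (q : ℕ) {b : ℝ} (hb : b < 1) : ∃ C : ℝ, 0 ≤ C ∧ ∀ κ u : ℝ, 0 < κ → κ ≤ b → 1 ≤ u →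
    |T 3 κ q u| ≤ C / u ^ 2 := by
  set ε : ℝ := (1 - b) / (q + 1) with hε
  have hε0 : 0 < ε := div_pos (by linarith) (by positivity)
  refine ⟨(1 + 3 + q) ^ 3 * (1 + 1 / ε) ^ q, by positivity, fun κ u h0 h1 hu => ?_⟩
  have hu0 : 0 < u := by linarith
  have hl := Real.log_nonneg hu
  have e := T_bound 3 κ q u hu
  have hlog : 1 + Real.log u ≤ (1 + 1 / ε) * u ^ ε := by
    have a1 := Real.log_le_rpow_div hu0.le hε0
    have a2 := Real.one_le_rpow hu hε0.le
    have : (1 + 1 / ε) * u ^ ε = u ^ ε + u ^ ε / ε := by ring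
    linarith
  have hpow : u ^ (κ - 3) * (u ^ ε) ^ q ≤ 1 / u ^ 2 := by
    rw [← Real.rpow_natCast (u ^ ε), ← Real.rpow_mul hu0.le, ← Real.rpow_add hu0, one_div,
      ← Real.rpow_natCast u, ← Real.rpow_neg hu0.le]
    apply Real.rpow_le_rpow_of_exponent_le hu
    have : ε * q ≤ 1 - b := by
      rw [hε, div_mul_eq_mul_div, div_le_iff₀ (by positivity)]
      nlinarith
    push_cast
    linarith
  push_cast at e
  calc |T 3 κ q u| ≤ (|κ| + 3 + q) ^ 3 * (u ^ (κ - 3) * (1 + Real.log u) ^ q) := e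
    _ ≤ (1 + 3 + q) ^ 3 * (u ^ (κ - 3) * ((1 + 1 / ε) * u ^ ε) ^ q) := by
      gcongr
      rw [abs_of_pos h0]; linarith
    _ = (1 + 3 + q) ^ 3 * (1 + 1 / ε) ^ q * (u ^ (κ - 3) * (u ^ ε) ^ q) := by
      rw [mul_pow]; ring
    _ ≤ (1 + 3 + q) ^ 3 * (1 + 1 / ε) ^ q * (1 / u ^ 2) := by gcongr
    _ = _ := by ring

lemma J_far {g : ℝ → ℝ} (hg : Continuous g) (hs : HasCompactSupport g) (q : ℕ)
    (hm : ∀ m : ℕ, m ≤ 3 → ∫ s, s ^ m * g s = 0) {R : ℝ} (hR : 0 ≤ R)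
    (hsub : tsupport g ⊆ Icc (-R) R) {b : ℝ} (hb : b < 1) :
    ∃ C : ℝ, ∀ κ x : ℝ, 0 < κ → κ ≤ b → 2 * R + 2 ≤ x → (3 + |x|) ^ 2 * |J g q x κ| ≤ C := by
  obtain ⟨C, hC0, hC⟩ := T3_bound q hb
  refine ⟨36 * C * R * R * R * ∫ s, |g s|, fun κ x h0 h1 hx => ?_⟩
  have hx0 : 0 < x := by linarith
  have hy : ∀ y ∈ Icc (x - R) (x + R), x / 2 ≤ y ∧ 1 ≤ y := fun y hy =>
    ⟨by linarith [hy.1], by linarith [hy.1]⟩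
  have hM : ∀ y ∈ Icc (x - R) (x + R), |T 3 κ q y| ≤ 4 * C / x ^ 2 := by
    intro y hy'
    obtain ⟨a1, a2⟩ := hy y hy'
    calc |T 3 κ q y| ≤ C / y ^ 2 := hC κ y h0 h1 a2
      _ ≤ C / (x / 2) ^ 2 := by gcongr
      _ = 4 * C / x ^ 2 := by field_simp; ring
  have tay := taylor3 (f := T 0 κ q) hR
    (fun y h => T_deriv 0 κ q y (by linarith [(hy y h).2]))
    (fun y h => T_deriv 1 κ q y (by linarith [(hy y h).2]))
    (fun y h => T_deriv 2 κ q y (by linarith [(hy y h).2])) hM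
  set P : ℝ → ℝ := fun s => T 0 κ q x - s * T 1 κ q x + s ^ 2 / 2 * T 2 κ q x with hP
  have hmi : ∀ m : ℕ, Integrable fun s => s ^ m * g s := fun m =>
    ((continuous_pow m).mul hg).integrable_of_hasCompactSupport hs.mul_left
  have hPg : (fun s => P s * g s) = fun s => T 0 κ q x * (s ^ 0 * g s) - T 1 κ q x * (s ^ 1 * g s)
      + T 2 κ q x / 2 * (s ^ 2 * g s) := by
    funext s; simp only [hP]; ring
  have hPint : Integrable fun s => P s * g s := by
    rw [hPg]
    exact (((hmi 0).const_mul _).sub ((hmi 1).const_mul _)).add ((hmi 2).const_mul _)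
  have hI01 : Integrable fun s => T 0 κ q x * (s ^ 0 * g s) - T 1 κ q x * (s ^ 1 * g s) :=
    ((hmi 0).const_mul _).sub ((hmi 1).const_mul _)
  have hP0 : ∫ s, P s * g s = 0 := by
    rw [hPg, integral_add hI01 ((hmi 2).const_mul _),
      integral_sub ((hmi 0).const_mul _) ((hmi 1).const_mul _), integral_const_mul,
      integral_const_mul, integral_const_mul, hm 0 (by norm_num), hm 1 (by norm_num),
      hm 2 (by norm_num)]
    simp
  have hJ : J g q x κ = ∫ s, (K q (x - s) κ * g s - P s * g s) := by
    rw [integral_sub (J_int hg hs q h0 x) hPint, hP0, sub_zero, J]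
  have hbd : |J g q x κ| ≤ 4 * C / x ^ 2 * R * R * R * ∫ s, |g s| := by
    rw [hJ, ← integral_const_mul, ← Real.norm_eq_abs]
    refine norm_integral_le_of_norm_le
      ((hg.integrable_of_hasCompactSupport hs).abs.const_mul _) (ae_of_all _ fun s => ?_)
    by_cases h : s ∈ tsupport g
    · have hs' := hsub h
      have hsR : |s| ≤ R := abs_le.2 hs'
      have hpos : 0 < x - s := by linarith [hs'.2]
      rw [← sub_mul, norm_mul, K_of_pos q hpos]
      exact mul_le_mul_of_nonneg_right (tay s hsR) (abs_nonneg _)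
    · simp [image_eq_zero_of_notMem_tsupport h]
  have hI : 0 ≤ ∫ s, |g s| := integral_nonneg fun s => abs_nonneg _
  rw [abs_of_pos hx0]
  calc (3 + x) ^ 2 * |J g q x κ|
      ≤ (3 * x) ^ 2 * (4 * C / x ^ 2 * R * R * R * ∫ s, |g s|) := by
        gcongr; linarith
    _ = 36 * C * R * R * R * ∫ s, |g s| := by field_simp; ring

lemma J_loc {g : ℝ → ℝ} (hg : Continuous g) (hs : HasCompactSupport g) (q : ℕ)
    (hm : ∀ m : ℕ, m ≤ 3 → ∫ s, s ^ m * g s = 0) {a b : ℝ} (ha : 0 < a) (hb : b < 1) :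
    ∃ C : ℝ, ∀ κ x : ℝ, κ ∈ Icc a b → (3 + |x|) ^ 2 * |J g q x κ| ≤ C := by
  obtain ⟨R, hR0, hR⟩ : ∃ R : ℝ, 0 ≤ R ∧ tsupport g ⊆ Icc (-R) R := by
    obtain ⟨R, hR⟩ := (IsCompact.isBounded (s := tsupport g) hs).subset_closedBall 0
    refine ⟨max R 0, le_max_right _ _, fun s h => ?_⟩
    have := hR h
    rw [Real.closedBall_eq_Icc] at this
    exact ⟨by linarith [this.1, le_max_left R 0], by linarith [this.2, le_max_left R 0]⟩
  obtain ⟨C1, h1⟩ := J_far hg hs q hm hR0 hR hb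
  have hcomp : IsCompact (Icc (-R) (2 * R + 2) ×ˢ Icc a b) := isCompact_Icc.prod isCompact_Icc
  have hc : ContinuousOn (fun z : ℝ × ℝ => (3 + |z.1|) ^ 2 * |J g q z.1 z.2|)
      (Icc (-R) (2 * R + 2) ×ˢ Icc a b) := by
    refine ContinuousOn.mul (by fun_prop) ?_
    exact ((J_contOn hg hs q).mono fun z hz => ⟨mem_univ _, lt_of_lt_of_le ha hz.2.1⟩).abs
  obtain ⟨C2, h2⟩ := hcomp.exists_bound_of_continuousOn hc
  refine ⟨max (max C1 C2) 0, fun κ x hκ => ?_⟩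
  rcases lt_or_ge x (-R) with hx | hx
  · have : J g q x κ = 0 := by
      unfold J
      refine integral_eq_zero_of_ae (ae_of_all _ fun s => ?_)
      by_cases h : s ∈ tsupport g
      · simp [K_of_nonpos q (show x - s ≤ 0 by linarith [(hR h).1])]
      · simp [image_eq_zero_of_notMem_tsupport h]
    rw [this]; simp
  · rcases le_or_gt (2 * R + 2) x with hx2 | hx2
    · exact (h1 κ x (ha.trans_le hκ.1) hκ.2 hx2).trans ((le_max_left _ _).trans (le_max_left _ _))
    · exact ((le_abs_self _).trans (h2 (x, κ) ⟨⟨hx, hx2.le⟩, hκ⟩)).trans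
        ((le_max_right _ _).trans (le_max_left _ _))

lemma iter_supp {ψ : ℝ → ℝ} (hs : HasCompactSupport ψ) (p : ℕ) :
    HasCompactSupport (iteratedDeriv p ψ) := by
  induction p with
  | zero => simpa using hs
  | succ n ih => rw [iteratedDeriv_succ]; exact ih.deriv

lemma iter_contDiff {ψ : ℝ → ℝ} (hψ : ContDiff ℝ 3 ψ) {p : ℕ} (hp : p < 3) :
    ContDiff ℝ 1 (iteratedDeriv p ψ) := by
  rw [iteratedDeriv_eq_iterate]
  refine ContDiff.iterate_deriv' 1 p (hψ.of_le ?_)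
  exact_mod_cast (by omega : 1 + p ≤ 3)

lemma iter_cont {ψ : ℝ → ℝ} (hψ : ContDiff ℝ 3 ψ) {p : ℕ} (hp : p ≤ 3) :
    Continuous (iteratedDeriv p ψ) :=
  hψ.continuous_iteratedDeriv p (by exact_mod_cast hp)

lemma iter_mom {ψ : ℝ → ℝ} (hψ : ContDiff ℝ 3 ψ) (hs : HasCompactSupport ψ)
    (hmom : ∀ m : ℕ, m ≤ 3 → (∫ s : ℝ, s ^ m * ψ s) = 0) (p : ℕ) :
    p ≤ 3 → ∀ m : ℕ, m ≤ 3 → (∫ s : ℝ, s ^ m * iteratedDeriv p ψ s) = 0 := by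
  induction p with
  | zero => intro _; simpa using hmom
  | succ p ih =>
    intro hp m hm
    have hd := iter_contDiff hψ (show p < 3 by omega)
    have hsp := iter_supp hs p
    have hc' : Continuous (deriv (iteratedDeriv p ψ)) := hd.continuous_deriv le_rfl
    rw [iteratedDeriv_succ]
    have hi : ∀ h g : ℝ → ℝ, Continuous h → Continuous g → HasCompactSupport g →
        Integrable (h * g) := fun h g h1 h2 h3 =>
      (h1.mul h2).integrable_of_hasCompactSupport h3.mul_left
    rw [integral_mul_deriv_eq_deriv_mul_of_integrable (u := fun s => s ^ m)
      (u' := fun s => m * s ^ (m - 1)) (v := iteratedDeriv p ψ)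
      (fun x _ => hasDerivAt_pow m x)
      (fun x _ => ((hd.differentiable (by norm_num)) x).hasDerivAt)
      (hi _ _ (by fun_prop) hc' hsp.deriv) (hi _ _ (by fun_prop) hd.continuous hsp)
      (hi _ _ (by fun_prop) hd.continuous hsp)]
    simp only [mul_assoc]
    rw [integral_const_mul, ih (by omega) (m - 1) (by omega)]
    simp

end FPL

/-- Localization lemma for the fractional primitive `Ψ` of a `C³` compactly supported
wavelet `ψ` with vanishing moments of order `≤ 3`: there is a family `D p q` of functions
with `D 0 0 = Ψ`, realizing the mixed partial derivatives `∂ₓ^p ∂_v^q Ψ` for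
`p ∈ {0,1,2,3}` and all `q ∈ ℕ`, each continuous on `ℝ × (1/α, 1)` and well-localized in
`x` uniformly in `v` on every compact subinterval `[A,B] ⊂ (1/α, 1)`. -/
theorem fracPrimitive_localization
    (α : ℝ) (hα₁ : 1 < α) (hα₂ : α < 2)
    (ψ : ℝ → ℝ) (hψ : ContDiff ℝ 3 ψ) (hsupp : HasCompactSupport ψ)
    (hmom : ∀ m : ℕ, m ≤ 3 → (∫ s : ℝ, s ^ m * ψ s) = 0) :
    ∃ D : ℕ → ℕ → ℝ → ℝ → ℝ,
      (∀ x v : ℝ, D 0 0 x v = fracPrimitive α ψ x v) ∧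
      (∀ p q : ℕ, p < 3 → ∀ x : ℝ, ∀ v ∈ Ioo (1 / α) 1,
        HasDerivAt (fun x' => D p q x' v) (D (p + 1) q x v) x) ∧
      (∀ p q : ℕ, p ≤ 3 → ∀ x : ℝ, ∀ v ∈ Ioo (1 / α) 1,
        HasDerivAt (fun v' => D p q x v') (D p (q + 1) x v) v) ∧
      (∀ p q : ℕ, p ≤ 3 →
        ContinuousOn (fun xv : ℝ × ℝ => D p q xv.1 xv.2) (univ ×ˢ Ioo (1 / α) 1)) ∧
      (∀ p q : ℕ, p ≤ 3 → ∀ A B : ℝ, 1 / α < A → A < B → B < 1 →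
        ∃ c : ℝ, ∀ x : ℝ, ∀ v ∈ Icc A B, (3 + |x|) ^ 2 * |D p q x v| ≤ c) := by
  refine ⟨fun p q x v => FPL.J (iteratedDeriv p ψ) q x (v - 1 / α), ?_, ?_, ?_, ?_, ?_⟩
  · intro x v
    simp [FPL.J, FPL.K, fracPrimitive]
  · intro p q hp x v hv
    have h := FPL.J_deriv_x (FPL.iter_contDiff hψ hp) (FPL.iter_supp hsupp p) q
      (sub_pos.2 hv.1) x
    rwa [← iteratedDeriv_succ] at h
  · intro p q hp x v hv
    exact (FPL.J_deriv_κ (FPL.iter_cont hψ hp) (FPL.iter_supp hsupp p) q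
      (sub_pos.2 hv.1) x).comp_sub_const v (1 / α)
  · intro p q hp
    refine (FPL.J_contOn (FPL.iter_cont hψ hp) (FPL.iter_supp hsupp p) q).comp
      (f := fun z : ℝ × ℝ => (z.1, z.2 - 1 / α)) (by fun_prop) ?_
    intro z hz
    exact ⟨mem_univ _, sub_pos.2 hz.2.1⟩
  · intro p q hp A B hA hAB hB
    have hα : 0 < 1 / α := by positivity
    obtain ⟨C, hC⟩ := FPL.J_loc (FPL.iter_cont hψ hp) (FPL.iter_supp hsupp p) q
      (FPL.iter_mom hψ hsupp hmom p hp) (a := A - 1 / α) (b := B - 1 / α)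
      (sub_pos.2 hA) (by linarith)
    exact ⟨C, fun x v hv => hC _ x ⟨by linarith [hv.1], by linarith [hv.2]⟩⟩
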